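/- Let G > 0, α, β > 0, p, q ≥ 0, M > 0, let 0 ≤ ω₋ ≤ ω₊ < 1, and let L ∈ Gℕ. Let Q = { j ∈ ℤ^d : Λ_G(Gj) ∩ Λ_L ≠ ∅ }. For each j ∈ Q let u_j : [0,1] × ℝ^d → [0,∞) be a bounded measurable function such that: (a) 0 ≤ u_j(t, x) ≤ M·𝟙_{Λ_G(Gj)}(x) for all t ∈ [0,1] and x ∈ ℝ^d; (b) for all 0 ≤ s < t ≤ 1 there exists a point x₀ ∈ ℝ^d (depending on j, s, t) with u_j(t, x) − u_j(s, x) ≥ α(t−s)^p · 𝟙_{B(x₀, β(t−s)^q)}(x) for all x. Let ω = (ω_j)_{j∈Q} with ω_j ∈ [ω₋, ω₊] for all j, and let 0 < μ ≤ 1 − ω₊ with βμ^q < G/2. Then there exists a (G, βμ^q)-equidistributed sequence Z such that for all x ∈ ℝ^d: α μ^p · 𝟙_{S_{βμ^q, Z}(L)}(x) ≤ Σ_{j∈Q} ( u_j(ω_j + μ, x) − u_j(ω_j, x) ) ≤ M. -/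

import Mathlib

/-- The open cube of side length `r` centered at `c` in `ℝ^d`. -/
def openCube (d : ℕ) (c : EuclideanSpace ℝ (Fin d)) (r : ℝ) :
    Set (EuclideanSpace ℝ (Fin d)) :=
  {x | ∀ i, |x i - c i| < r / 2}

/-- The lattice point `G·j ∈ (Gℤ)^d` viewed as a point of `ℝ^d`. -/
def latticeCenter (d : ℕ) (G : ℝ) (j : Fin d → ℤ) : EuclideanSpace ℝ (Fin d) :=
  WithLp.toLp 2 fun i => G * (j i : ℝ)

/-- The set `S_{δ,Z}(L)`: the union of the balls `B(z_j, δ)` over those lattice sites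
`j ∈ (Gℤ)^d` whose cube `Λ_G(j)` is contained in `Λ_L`. -/
def equiUnion (d : ℕ) (G : ℝ) (Z : (Fin d → ℤ) → EuclideanSpace ℝ (Fin d)) (δ L : ℝ) :
    Set (EuclideanSpace ℝ (Fin d)) :=
  ⋃ j ∈ {j : Fin d → ℤ | openCube d (latticeCenter d G j) G ⊆ openCube d 0 L},
    Metric.ball (Z j) δ

/-- The index set `Q` of lattice sites `j ∈ ℤ^d` whose cube `Λ_G(Gj)` meets `Λ_L`. -/
def indexSetQ (d : ℕ) (G L : ℝ) : Set (Fin d → ℤ) :=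
  {j | (openCube d (latticeCenter d G j) G ∩ openCube d 0 L).Nonempty}

theorem cube_unique {d : ℕ} {G : ℝ} (hG : 0 < G) {j k : Fin d → ℤ}
    {x : EuclideanSpace ℝ (Fin d)}
    (hj : x ∈ openCube d (latticeCenter d G j) G)
    (hk : x ∈ openCube d (latticeCenter d G k) G) : j = k := by
  funext i
  have h1 := abs_lt.1 (hj i)
  have h2 := abs_lt.1 (hk i)
  simp only [latticeCenter] at h1 h2
  have a1 : G * ((j i : ℝ) - k i) < G * 1 := by linarith [h1.1, h1.2, h2.1, h2.2]
  have a2 : G * ((k i : ℝ) - j i) < G * 1 := by linarith [h1.1, h1.2, h2.1, h2.2]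
  have b1 := lt_of_mul_lt_mul_left a1 hG.le
  have b2 := lt_of_mul_lt_mul_left a2 hG.le
  have c1 : j i - k i < 1 := by exact_mod_cast b1
  have c2 : k i - j i < 1 := by exact_mod_cast b2
  omega

theorem ball_sub_cube {d : ℕ} {G δ : ℝ} (hδ : δ < G / 2) (c : EuclideanSpace ℝ (Fin d)) :
    Metric.ball c δ ⊆ openCube d c G := by
  intro x hx i
  have h1 : ‖(x - c) i‖ ≤ ‖x - c‖ := PiLp.norm_apply_le (x - c) i
  rw [Metric.mem_ball, dist_eq_norm] at hx
  rw [Real.norm_eq_abs] at h1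
  have h2 : (x - c) i = x i - c i := rfl
  rw [h2] at h1
  linarith

/-- Inequality (4.1) in the proof of the Wegner estimate: increasing all random parameters
by `μ` lifts the effective perturbation `V_ω^Q = Σ_{j∈Q} u_j(ω_j, ·)` at least by
`αμ^p·𝟙_{S_{βμ^q,Z}(L)}` for a suitable `(G, βμ^q)`-equidistributed sequence `Z`, while the
increment stays bounded by `M`. -/
theorem random_perturbation_increment_bounds
    (d : ℕ) (G α β p q M ωm ωp L μ : ℝ)
    (hG : 0 < G) (hα : 0 < α) (hβ : 0 < β) (hp : 0 ≤ p) (hq : 0 ≤ q) (hM : 0 < M)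
    (hωm : 0 ≤ ωm) (hωmp : ωm ≤ ωp) (hωp : ωp < 1)
    (n : ℕ) (hL : L = G * n)
    (u : (Fin d → ℤ) → ℝ → EuclideanSpace ℝ (Fin d) → ℝ)
    (hu_meas : ∀ j ∈ indexSetQ d G L, Measurable (Function.uncurry (u j)))
    (hu_nonneg : ∀ j ∈ indexSetQ d G L, ∀ t ∈ Set.Icc (0 : ℝ) 1, ∀ x, 0 ≤ u j t x)
    (hu_bdd : ∀ j ∈ indexSetQ d G L, ∀ t ∈ Set.Icc (0 : ℝ) 1, ∀ x,
      u j t x ≤ M * Set.indicator (openCube d (latticeCenter d G j) G) (fun _ => (1 : ℝ)) x)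
    (hu_mono : ∀ j ∈ indexSetQ d G L, ∀ s t : ℝ, 0 ≤ s → s < t → t ≤ 1 →
      ∃ x₀ : EuclideanSpace ℝ (Fin d), ∀ x,
        α * (t - s) ^ p * Set.indicator (Metric.ball x₀ (β * (t - s) ^ q)) (fun _ => (1 : ℝ)) x
          ≤ u j t x - u j s x)
    (ω : (Fin d → ℤ) → ℝ) (hω : ∀ j, ω j ∈ Set.Icc ωm ωp)
    (hμ0 : 0 < μ) (hμ : μ ≤ 1 - ωp) (hμG : β * μ ^ q < G / 2) :
    ∃ Z : (Fin d → ℤ) → EuclideanSpace ℝ (Fin d),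
      (∀ k, Metric.ball (Z k) (β * μ ^ q) ⊆ openCube d (latticeCenter d G k) G) ∧
      ∀ x : EuclideanSpace ℝ (Fin d),
        α * μ ^ p * Set.indicator (equiUnion d G Z (β * μ ^ q) L) (fun _ => (1 : ℝ)) x
            ≤ ∑' j : indexSetQ d G L, (u j (ω j + μ) x - u j (ω j) x) ∧
          ∑' j : indexSetQ d G L, (u j (ω j + μ) x - u j (ω j) x) ≤ M := by
  classical
  have hμp : 0 < α * μ ^ p := mul_pos hα (Real.rpow_pos_of_pos hμ0 p)
  have ht1 : ∀ j, ω j ∈ Set.Icc (0 : ℝ) 1 := fun j =>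
    ⟨by linarith [(hω j).1], by linarith [(hω j).2]⟩
  have ht2 : ∀ j, ω j + μ ∈ Set.Icc (0 : ℝ) 1 := fun j =>
    ⟨by linarith [(hω j).1], by linarith [(hω j).2]⟩
  have key : ∀ j : Fin d → ℤ, ∃ z : EuclideanSpace ℝ (Fin d),
      (j ∈ indexSetQ d G L → ∀ x,
        α * μ ^ p * Set.indicator (Metric.ball z (β * μ ^ q)) (fun _ => (1 : ℝ)) x
          ≤ u j (ω j + μ) x - u j (ω j) x) ∧
      (j ∉ indexSetQ d G L → z = latticeCenter d G j) := by
    intro j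
    by_cases hj : j ∈ indexSetQ d G L
    · obtain ⟨z, hz⟩ := hu_mono j hj (ω j) (ω j + μ) (ht1 j).1 (by linarith) (ht2 j).2
      refine ⟨z, fun _ => ?_, fun h => absurd hj h⟩
      simpa only [add_sub_cancel_left] using hz
    · exact ⟨_, fun h => absurd h hj, fun _ => rfl⟩
  choose Z hZ hZ' using key
  have hzero : ∀ j ∈ indexSetQ d G L, ∀ t ∈ Set.Icc (0 : ℝ) 1, ∀ x,
      x ∉ openCube d (latticeCenter d G j) G → u j t x = 0 := by
    intro j hj t ht x hx
    have h := hu_bdd j hj t ht x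
    rw [Set.indicator_of_notMem hx, mul_zero] at h
    exact le_antisymm h (hu_nonneg j hj t ht x)
  have hball : ∀ k, Metric.ball (Z k) (β * μ ^ q) ⊆ openCube d (latticeCenter d G k) G := by
    intro k
    by_cases hk : k ∈ indexSetQ d G L
    · intro x hx
      by_contra hxc
      have h := hZ k hk x
      rw [Set.indicator_of_mem hx, hzero k hk _ (ht1 k) x hxc,
        hzero k hk _ (ht2 k) x hxc] at h
      linarith
    · rw [hZ' k hk]
      exact ball_sub_cube hμG _
  have hnonneg : ∀ (j : indexSetQ d G L) x, 0 ≤ u j (ω j + μ) x - u j (ω j) x := fun j x =>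
    le_trans (mul_nonneg hμp.le (Set.indicator_nonneg (fun _ _ => zero_le_one) x)) (hZ j j.2 x)
  have hsum : ∀ (j : indexSetQ d G L) x, x ∈ openCube d (latticeCenter d G j) G →
      ∑' j : indexSetQ d G L, (u j (ω j + μ) x - u j (ω j) x)
        = u j (ω j + μ) x - u j (ω j) x := by
    intro j x hx
    refine tsum_eq_single j fun k hk => ?_
    have hxk : x ∉ openCube d (latticeCenter d G k) G := fun h =>
      hk (Subtype.ext (cube_unique hG h hx))
    rw [hzero k k.2 _ (ht1 k) x hxk, hzero k k.2 _ (ht2 k) x hxk, sub_zero]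
  refine ⟨Z, hball, fun x => ⟨?_, ?_⟩⟩
  · by_cases hx : x ∈ equiUnion d G Z (β * μ ^ q) L
    · have hx' := hx
      simp only [equiUnion, Set.mem_iUnion, Set.mem_setOf_eq] at hx'
      obtain ⟨j, hj, hxj⟩ := hx'
      have hc : latticeCenter d G j ∈ openCube d (latticeCenter d G j) G := by
        intro i
        simpa using hG
      have hjQ : j ∈ indexSetQ d G L := ⟨_, hc, hj hc⟩
      rw [hsum ⟨j, hjQ⟩ x (hball j hxj), Set.indicator_of_mem hx]
      have h := hZ j hjQ x
      rwa [Set.indicator_of_mem hxj] at h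
    · rw [Set.indicator_of_notMem hx, mul_zero]
      exact tsum_nonneg fun j => hnonneg j x
  · by_cases hx : ∃ j : indexSetQ d G L, x ∈ openCube d (latticeCenter d G j) G
    · obtain ⟨j, hj⟩ := hx
      rw [hsum j x hj]
      have h1 := hu_bdd j j.2 _ (ht2 j) x
      have h2 := hu_nonneg j j.2 _ (ht1 j) x
      rw [Set.indicator_of_mem hj] at h1
      linarith
    · have h0 : ∀ k : indexSetQ d G L, u k (ω k + μ) x - u k (ω k) x = 0 := fun k => by
        have hxk : x ∉ openCube d (latticeCenter d G k) G := fun h => hx ⟨k, h⟩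
        rw [hzero k k.2 _ (ht1 k) x hxk, hzero k k.2 _ (ht2 k) x hxk, sub_zero]
      simp only [h0, tsum_zero]
      exact hM.le
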